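/- Let X be a Banach space and T : X → X a bounded linear operator. Then the following are equivalent: (i) T is Li-Yorke chaotic (with respect to the metric induced by the norm); (ii) T admits a semi-irregular vector; (iii) T admits an irregular vector. -/

import Mathlib

/-!
Differences of orbits are orbits of differences, so a Li-Yorke pair `p, q` is the same thing as
a semi-irregular vector `p - q`, and the whole line spanned by a semi-irregular vector is a
Li-Yorke scrambled set. The substance is that a semi-irregular vector `z` yields an irregular one.

Let `Y` be the closed linear span of the orbit of `z`. Every `y` in the algebraic span is `P(T) z`
for a polynomial `P`, so `T ^ m y` is small whenever `T ^ m z` is very small; hence the vectors of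
`Y` with `liminf ‖T ^ n y‖ = 0` form a dense `G_δ` subset of `Y`. The restrictions of the tails of
`(T ^ n)` to `Y` are not uniformly bounded: a bound `C` would give
`‖T ^ n z‖ ≤ C ‖T ^ m z‖` for large `n - m`, forcing `T ^ n z → 0`. By the Banach-Steinhaus theorem
the vectors of `Y` with `limsup ‖T ^ n y‖ = ∞` also form a dense `G_δ`, and by Baire's theorem the
two sets meet (`exists_irregular_of_dense`).
-/

open Filter
open scoped ENNReal NNReal

/-- A continuous map on a metric space is Li-Yorke chaotic if there is an uncountable
set `S` such that every pair of distinct points of `S` is a Li-Yorke pair. -/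
def LiYorkeChaotic {M : Type*} [MetricSpace M] (f : M → M) : Prop :=
  ∃ S : Set M, ¬ S.Countable ∧ ∀ p ∈ S, ∀ q ∈ S, p ≠ q →
    Filter.liminf (fun n : ℕ => edist (f^[n] p) (f^[n] q)) Filter.atTop = 0 ∧
    0 < Filter.limsup (fun n : ℕ => edist (f^[n] p) (f^[n] q)) Filter.atTop

theorem liminf_eq_zero_iff_frequently (u : ℕ → ℝ≥0∞) :
    liminf u atTop = 0 ↔ ∀ ε : ℝ≥0∞, 0 < ε → ∃ᶠ n in atTop, u n < ε := by
  constructor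
  · intro h ε hε
    exact frequently_lt_of_liminf_lt (by isBoundedDefault) (h ▸ hε)
  · intro h
    refine le_antisymm (le_of_forall_gt fun ε hε => ?_) zero_le
    obtain ⟨δ, h0, h1⟩ := exists_between hε
    exact (liminf_le_of_frequently_le ((h δ h0).mono fun _ hn => hn.le)
      (by isBoundedDefault)).trans_lt h1

theorem edist_iterate_eq {E : Type*} [NormedAddCommGroup E] [NormedSpace ℝ E]
    (T : E →L[ℝ] E) (p q : E) (n : ℕ) :
    edist ((fun x => T x)^[n] p) ((fun x => T x)^[n] q) = (‖(T ^ n) (p - q)‖₊ : ℝ≥0∞) := by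
  have h : ∀ x, (fun x => T x)^[n] x = (T ^ n) x := fun x => by
    rw [FunLike.coe_pow_eq_iterate]
  rw [h, h, edist_eq_enorm_sub, map_sub]
  rfl

/-- A sequence of operators on a Banach space which is frequently small at each point of a dense
set, and no tail of which is uniformly bounded, has an irregular vector. -/
theorem exists_irregular_of_dense {F E : Type*} [NormedAddCommGroup F] [NormedSpace ℝ F]
    [CompleteSpace F] [NormedAddCommGroup E] [NormedSpace ℝ E] (S : ℕ → F →L[ℝ] E)
    (D : Set F) (hD : Dense D)
    (hsmall : ∀ x ∈ D, ∀ ε : ℝ, 0 < ε → ∀ k : ℕ, ∃ n ≥ k, ‖S n x‖ < ε)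
    (hbig : ∀ (k : ℕ) (C : ℝ), ∃ n, C < ‖S (n + k)‖) :
    ∃ x : F, (∀ k : ℕ, ∃ n ≥ k, ‖S n x‖ < 1 / ((k : ℝ) + 1)) ∧
      ∀ k : ℕ, ∃ n ≥ k, (k : ℝ) < ‖S n x‖ := by
  have hopenA : ∀ k : ℕ, IsOpen {x : F | ∃ n ≥ k, ‖S n x‖ < 1 / ((k : ℝ) + 1)} := by
    intro k
    simp only [Set.ofPred_exists, Set.ofPred_and]
    refine isOpen_iUnion fun n => (isOpen_const).inter (isOpen_lt (by fun_prop) (by fun_prop))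
  have hopenB : ∀ k : ℕ, IsOpen {x : F | ∃ n ≥ k, (k : ℝ) < ‖S n x‖} := by
    intro k
    simp only [Set.ofPred_exists, Set.ofPred_and]
    refine isOpen_iUnion fun n => (isOpen_const).inter (isOpen_lt (by fun_prop) (by fun_prop))
  have hA : ∀ k : ℕ, Dense {x : F | ∃ n ≥ k, ‖S n x‖ < 1 / ((k : ℝ) + 1)} := fun k =>
    hD.mono fun x hx => hsmall x hx _ (by positivity) k
  have hB : ∀ k : ℕ, Dense {x : F | ∃ n ≥ k, (k : ℝ) < ‖S n x‖} := by
    intro k x₀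
    by_contra hx₀
    rw [Metric.mem_closure_iff] at hx₀
    push Not at hx₀
    obtain ⟨r, hr, hball⟩ := hx₀
    have hle : ∀ y, dist x₀ y < r → ∀ n ≥ k, ‖S n y‖ ≤ k := by
      intro y hy n hn
      by_contra hlt
      exact absurd hy (not_lt.2 (hball y ⟨n, hn, not_le.1 hlt⟩))
    obtain ⟨C, hC⟩ := banach_steinhaus (g := fun n => S (n + k)) (fun y => by
      -- A multiple `c • y` with `‖c • y‖ < r` is a difference of two points of the ball.
      obtain ⟨c, hc, hcy⟩ : ∃ c : ℝ, 0 < c ∧ c * ‖y‖ < r := by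
        refine ⟨r / (‖y‖ + 1), by positivity, ?_⟩
        rw [div_mul_eq_mul_div, div_lt_iff₀ (by positivity)]
        nlinarith
      refine ⟨(k + k) / c, fun n => ?_⟩
      have h1 := hle x₀ (by simpa using hr) (n + k) (Nat.le_add_left _ _)
      have h2 := hle (x₀ + c • y) (by
        rw [dist_self_add_right, norm_smul, Real.norm_of_nonneg hc.le]; exact hcy) (n + k)
        (Nat.le_add_left _ _)
      have h3 : c * ‖S (n + k) y‖ = ‖S (n + k) (x₀ + c • y) - S (n + k) x₀‖ := by
        rw [map_add, add_sub_cancel_left, map_smul, norm_smul, Real.norm_of_nonneg hc.le]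
      rw [le_div_iff₀ hc, mul_comm, h3]
      exact (norm_sub_le _ _).trans (add_le_add h2 h1))
    obtain ⟨n, hn⟩ := hbig k C
    exact absurd (hC n) (not_le.2 hn)
  have hall : Dense (⋂ k : ℕ, ({x : F | ∃ n ≥ k, ‖S n x‖ < 1 / ((k : ℝ) + 1)} ∩
      {x : F | ∃ n ≥ k, (k : ℝ) < ‖S n x‖})) :=
    dense_iInter_of_isOpen_nat (fun k => (hopenA k).inter (hopenB k))
      fun k => (hA k).inter_of_isOpen_left (hB k) (hopenA k)
  obtain ⟨x, hx⟩ := hall.nonempty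
  rw [Set.mem_iInter] at hx
  exact ⟨x, fun k => (hx k).1, fun k => (hx k).2⟩

/-- Smallness of the orbit along a sequence of times passes to the linear span of the orbit. -/
theorem exists_small_of_mem_span {E : Type*} [NormedAddCommGroup E] [NormedSpace ℝ E]
    (T : E →L[ℝ] E) (z : E)
    (hz : ∀ ε : ℝ, 0 < ε → ∀ k : ℕ, ∃ n ≥ k, ‖(T ^ n) z‖ < ε) (y : E)
    (hy : y ∈ Submodule.span ℝ (Set.range fun n : ℕ => (T ^ n) z)) (ε : ℝ) (hε : 0 < ε) (k : ℕ) :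
    ∃ n ≥ k, ‖(T ^ n) y‖ < ε := by
  -- Every `y` in the span is `Q z` with `Q` a polynomial in `T`, hence commuting with `T`.
  obtain ⟨Q, hQ, rfl⟩ : ∃ Q : E →L[ℝ] E, Commute T Q ∧ Q z = y := by
    induction hy using Submodule.span_induction with
    | mem x hx =>
      obtain ⟨n, rfl⟩ := hx
      exact ⟨T ^ n, Commute.self_pow T n, rfl⟩
    | zero => exact ⟨0, Commute.zero_right T, rfl⟩
    | add x y _ _ hx hy =>
      obtain ⟨P, hP, rfl⟩ := hx
      obtain ⟨Q, hQ, rfl⟩ := hy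
      exact ⟨P + Q, hP.add_right hQ, rfl⟩
    | smul a x _ hx =>
      obtain ⟨P, hP, rfl⟩ := hx
      exact ⟨a • P, hP.smul_right a, rfl⟩
  obtain ⟨n, hn, hlt⟩ := hz (ε / (‖Q‖ + 1)) (by positivity) k
  refine ⟨n, hn, ?_⟩
  have hcomm : (T ^ n) (Q z) = Q ((T ^ n) z) := DFunLike.congr_fun (hQ.pow_left n).eq z
  rw [lt_div_iff₀ (by positivity)] at hlt
  rw [hcomm]
  have := Q.le_opNorm ((T ^ n) z)
  nlinarith [norm_nonneg ((T ^ n) z)]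

theorem exists_irregular_of_semi_irregular {E : Type*} [NormedAddCommGroup E] [NormedSpace ℝ E]
    [CompleteSpace E] (T : E →L[ℝ] E) (z : E)
    (hz : ∀ ε : ℝ, 0 < ε → ∀ k : ℕ, ∃ n ≥ k, ‖(T ^ n) z‖ < ε)
    (δ : ℝ) (hδ : 0 < δ) (hz' : ∀ k : ℕ, ∃ n ≥ k, δ < ‖(T ^ n) z‖) :
    ∃ x : E, (∀ k : ℕ, ∃ n ≥ k, ‖(T ^ n) x‖ < 1 / ((k : ℝ) + 1)) ∧
      ∀ k : ℕ, ∃ n ≥ k, (k : ℝ) < ‖(T ^ n) x‖ := by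
  set V := Submodule.span ℝ (Set.range fun n : ℕ => (T ^ n) z) with hV
  let Y := V.topologicalClosure
  have : CompleteSpace Y := V.isClosed_topologicalClosure.completeSpace_coe
  obtain ⟨x, hx⟩ := exists_irregular_of_dense (fun n => (T ^ n).comp Y.subtypeL)
    {y : Y | (y : E) ∈ V} (by
      intro y
      rw [closure_subtype]
      refine closure_mono ?_ y.2
      intro v hv
      exact ⟨⟨v, V.le_topologicalClosure hv⟩, hv, rfl⟩)
    (fun y hy ε hε k => exists_small_of_mem_span T z hz y hy ε hε k) (by
      intro k C
      by_contra! hC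
      obtain ⟨m, -, hm⟩ := hz (δ / (|C| + 1)) (by positivity) 0
      obtain ⟨n, hn, hlt⟩ := hz' (m + k)
      obtain ⟨j, rfl⟩ := Nat.exists_eq_add_of_le hn
      let w : Y := ⟨(T ^ m) z, V.le_topologicalClosure (Submodule.subset_span ⟨m, rfl⟩)⟩
      have h1 : ‖(T ^ (j + k)) ((T ^ m) z)‖ ≤ C * ‖(T ^ m) z‖ :=
        ((T ^ (j + k)).comp Y.subtypeL).le_of_opNorm_le (hC j) w
      have h2 : (T ^ (m + k + j)) z = (T ^ (j + k)) ((T ^ m) z) := by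
        rw [show m + k + j = (j + k) + m by ring, pow_add]; rfl
      rw [h2] at hlt
      rw [lt_div_iff₀ (by positivity)] at hm
      nlinarith [norm_nonneg ((T ^ m) z), le_abs_self C])
  exact ⟨x, hx⟩

/-- For a bounded linear operator `T` on a Banach space, the following are equivalent:
(i) `T` is Li-Yorke chaotic; (ii) `T` admits a semi-irregular vector;
(iii) `T` admits an irregular vector. -/
theorem stmt_1 {E : Type*} [NormedAddCommGroup E] [NormedSpace ℝ E] [CompleteSpace E]
    (T : E →L[ℝ] E) :
    List.TFAE [
      LiYorkeChaotic (fun x => T x),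
      ∃ z : E,
        Filter.liminf (fun n : ℕ => (‖(T ^ n) z‖₊ : ℝ≥0∞)) Filter.atTop = 0 ∧
        0 < Filter.limsup (fun n : ℕ => (‖(T ^ n) z‖₊ : ℝ≥0∞)) Filter.atTop,
      ∃ z : E,
        Filter.liminf (fun n : ℕ => (‖(T ^ n) z‖₊ : ℝ≥0∞)) Filter.atTop = 0 ∧
        Filter.limsup (fun n : ℕ => (‖(T ^ n) z‖₊ : ℝ≥0∞)) Filter.atTop = ⊤
    ] := by
  have key : ∀ (x : E) (n : ℕ) (c : ℝ), 0 ≤ c →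
      ((‖(T ^ n) x‖₊ : ℝ≥0∞) < ENNReal.ofReal c ↔ ‖(T ^ n) x‖ < c) := by
    intro x n c hc
    rw [← enorm_eq_nnnorm, ← ofReal_norm, ENNReal.ofReal_lt_ofReal_iff_of_nonneg (norm_nonneg _)]
  have key' : ∀ (x : E) (n : ℕ) (c : ℝ), 0 ≤ c →
      (ENNReal.ofReal c < (‖(T ^ n) x‖₊ : ℝ≥0∞) ↔ c < ‖(T ^ n) x‖) := by
    intro x n c hc
    rw [← enorm_eq_nnnorm, ← ofReal_norm, ENNReal.ofReal_lt_ofReal_iff_of_nonneg hc]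
  tfae_have 1 → 2 := by
    rintro ⟨S, hS, h⟩
    have hnt : S.Nontrivial := by
      by_contra hn
      exact hS (Set.not_nontrivial_iff.1 hn).countable
    obtain ⟨p, hp, q, hq, hpq⟩ := hnt
    refine ⟨p - q, ?_⟩
    simpa only [edist_iterate_eq] using h p hp q hq hpq
  tfae_have 2 → 3 := by
    rintro ⟨z, h0, hpos⟩
    rw [liminf_eq_zero_iff_frequently] at h0
    obtain ⟨δ, hδ0, hδ⟩ := ENNReal.lt_iff_exists_nnreal_btwn.1 hpos
    have hf := frequently_lt_of_lt_limsup (by isBoundedDefault) hδ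
    obtain ⟨x, hx1, hx2⟩ := exists_irregular_of_semi_irregular T z
      (fun ε hε k => by
        obtain ⟨n, hn, hlt⟩ := frequently_atTop.1 (h0 _ (ENNReal.ofReal_pos.2 hε)) k
        exact ⟨n, hn, (key z n ε hε.le).1 hlt⟩)
      δ (by exact_mod_cast hδ0)
      (fun k => by
        obtain ⟨n, hn, hlt⟩ := frequently_atTop.1 hf k
        exact ⟨n, hn, by exact_mod_cast hlt⟩)
    refine ⟨x, (liminf_eq_zero_iff_frequently _).2 fun ε hε => ?_, ?_⟩
    · refine frequently_atTop.2 fun N => ?_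
      obtain ⟨δ', hδ'0, hδ'⟩ := ENNReal.lt_iff_exists_nnreal_btwn.1 hε
      have hδ'pos : (0 : ℝ) < δ' := by exact_mod_cast hδ'0
      obtain ⟨k, hk⟩ := exists_nat_one_div_lt hδ'pos
      obtain ⟨n, hn, hlt⟩ := hx1 (max N k)
      refine ⟨n, (le_max_left _ _).trans hn, lt_trans ?_ hδ'⟩
      have h1 : 1 / (((max N k : ℕ) : ℝ) + 1) ≤ 1 / ((k : ℝ) + 1) :=
        Nat.one_div_le_one_div (le_max_right _ _)
      have h2 : ‖(T ^ n) x‖ < δ' := hlt.trans_le (h1.trans hk.le)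
      exact_mod_cast h2
    · refine ENNReal.eq_top_of_forall_nnreal_le fun r => ?_
      refine le_limsup_of_frequently_le (frequently_atTop.2 fun N => ?_) (by isBoundedDefault)
      obtain ⟨k, hk⟩ := exists_nat_gt r
      obtain ⟨n, hn, hlt⟩ := hx2 (max N k)
      refine ⟨n, (le_max_left _ _).trans hn, ?_⟩
      have h1 : (k : ℝ) ≤ ((max N k : ℕ) : ℝ) := by exact_mod_cast le_max_right _ _
      have h3 : (r : ℝ) < k := by exact_mod_cast hk
      have h2 : (r : ℝ) ≤ ‖(T ^ n) x‖ := (h3.trans_le (h1.trans hlt.le)).le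
      exact_mod_cast h2
  tfae_have 3 → 1 := by
    rintro ⟨z, h0, htop⟩
    have hz : z ≠ 0 := by
      rintro rfl
      simp at htop
    have hinj : Function.Injective fun a : ℝ => a • z := smul_left_injective ℝ hz
    refine ⟨Set.range fun a : ℝ => a • z, ?_, ?_⟩
    · intro hc
      rw [← Set.image_univ] at hc
      exact Cardinal.not_countable_real (Set.countable_of_injective_of_countable_image hinj.injOn hc)
    · rintro _ ⟨a, rfl⟩ _ ⟨b, rfl⟩ hab
      have hc : a - b ≠ 0 := fun h => hab (by rw [sub_eq_zero.1 h])
      have hc' : (‖a - b‖₊ : ℝ≥0∞) ≠ 0 := by simpa using hc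
      have heq : ∀ n : ℕ, edist ((fun x => T x)^[n] (a • z)) ((fun x => T x)^[n] (b • z)) =
          (‖a - b‖₊ : ℝ≥0∞) * (‖(T ^ n) z‖₊ : ℝ≥0∞) := fun n => by
        rw [edist_iterate_eq, ← sub_smul, map_smul, nnnorm_smul, ENNReal.coe_mul]
      simp only [heq]
      rw [ENNReal.limsup_const_mul_of_ne_top ENNReal.coe_ne_top,
        ENNReal.liminf_const_mul_of_ne_top ENNReal.coe_ne_top, h0, htop, mul_zero,
        ENNReal.mul_top hc']
      exact ⟨rfl, ENNReal.zero_lt_top⟩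
  tfae_finish
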